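/- Let M be an invertible symmetric n×n real matrix, V : ℝⁿ → ℝ differentiable with gradient V_q, μ : ℝⁿ → ℝ^{m×n}, Y : ℝⁿ → ℝⁿ a vector field, Π(q) = M·Y(q), and h > 0. Define the discrete Lagrangian L_d(x, y) = (h/2) L(x, (y−x)/h) + (h/2) L(y, (y−x)/h), where L(q, q̇) = (1/2) q̇ᵀ M q̇ − V(q). Then for q_{k−1}, q_k, q_{k+1} ∈ ℝⁿ and λ ∈ ℝᵐ, the affine GNI equations D₁L_d(q_k, q_{k+1}) + D₂L_d(q_{k−1}, q_k) = μ(q_k)ᵀ λ and μ(q_k) M⁻¹ ( D₁L_d(q_k, q_{k+1}) − D₂L_d(q_{k−1}, q_k) + 2 Π(q_k) ) = 0 hold if and only if, with λ̃ = λ/h, the affine nonholonomic SHAKE scheme holds: q_{k+1} − 2q_k + q_{k−1} = −h² M⁻¹ ( V_q(q_k) + μ(q_k)ᵀ λ̃ ) and μ(q_k) ( (q_{k+1} − q_{k−1})/(2h) − Y(q_k) ) = 0. -/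

import Mathlib

/-!
Since `M` is symmetric, the discrete Lagrangian
`L_d(x, y) = (1/(2h)) (y - x)ᵀ M (y - x) - (h/2) (V x + V y)` has the partial gradients
`D₁L_d(q₁, q₂) = -(1/h) M (q₂ - q₁) - (h/2) V_q(q₁)` and
`D₂L_d(q₀, q₁) = (1/h) M (q₁ - q₀) - (h/2) V_q(q₁)`.
Both come from `gradient_of_quadratic_sub_potential`, which differentiates along lines. Their sum
is `-(1/h) M (q₂ - 2 q₁ + q₀) - h V_q(q₁)` and their difference is `-(1/h) M (q₂ - q₀)`. Applying
`M⁻¹` turns the first GNI equation into the SHAKE update and the second one into `-2` times the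
SHAKE constraint.
-/

open Matrix

/-- The continuous linear functional on `ℝⁿ` given by dot product with `w`;
used to express gradients of scalar functions. -/
noncomputable def vecCLM {n : ℕ} (w : Fin n → ℝ) : (Fin n → ℝ) →L[ℝ] ℝ :=
  ∑ i, w i • ContinuousLinearMap.proj (R := ℝ) (φ := fun _ : Fin n => ℝ) i

theorem vecCLM_apply {n : ℕ} (w v : Fin n → ℝ) : vecCLM w v = w ⬝ᵥ v := by
  simp [vecCLM, dotProduct]

theorem quadratic_add_smul {n : ℕ} (M : Matrix (Fin n) (Fin n) ℝ) (hMsymm : Mᵀ = M)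
    (v w : Fin n → ℝ) (t : ℝ) :
    (v + t • w) ⬝ᵥ M *ᵥ (v + t • w) =
      v ⬝ᵥ M *ᵥ v + t * (2 * ((M *ᵥ v) ⬝ᵥ w)) + t ^ 2 * (w ⬝ᵥ M *ᵥ w) := by
  have hvw : v ⬝ᵥ M *ᵥ w = (M *ᵥ v) ⬝ᵥ w := by
    rw [dotProduct_mulVec, ← mulVec_transpose, hMsymm]
  have hwv : w ⬝ᵥ M *ᵥ v = (M *ᵥ v) ⬝ᵥ w := dotProduct_comm _ _
  simp only [mulVec_add, mulVec_smul, dotProduct_add, add_dotProduct, dotProduct_smul,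
    smul_dotProduct, smul_eq_mul, hvw, hwv]
  ring

/-- The gradient at `q` of a function of the form `a uᵀ M u - b (V x + c)` with `u = v + s (x - q)`.
Both partial maps of the discrete Lagrangian have this form, with `s = -1` in the first argument
and `s = 1` in the second. -/
theorem gradient_of_quadratic_sub_potential {n : ℕ} (M : Matrix (Fin n) (Fin n) ℝ)
    (hMsymm : Mᵀ = M) (V : (Fin n → ℝ) → ℝ) (q g v D : Fin n → ℝ) (a b c s : ℝ)
    (hV : HasFDerivAt V (vecCLM g) q) (F : (Fin n → ℝ) → ℝ)
    (hF : ∀ x, F x = a * ((v + s • (x - q)) ⬝ᵥ M *ᵥ (v + s • (x - q))) - b * (V x + c))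
    (hD : HasFDerivAt F (vecCLM D) q) :
    D = (2 * a * s) • (M *ᵥ v) - b • g := by
  refine dotProduct_eq _ _ fun w => ?_
  have hFline : HasDerivAt (fun t : ℝ => F (q + t • w)) (D ⬝ᵥ w) 0 := by
    rw [← vecCLM_apply]
    exact hD.hasLineDerivAt w
  have hVline : HasDerivAt (fun t : ℝ => V (q + t • w)) (g ⬝ᵥ w) 0 := by
    rw [← vecCLM_apply]
    exact hV.hasLineDerivAt w
  have hpoly : HasDerivAt (fun t : ℝ => a * (v ⬝ᵥ M *ᵥ v + (s * t) * (2 * ((M *ᵥ v) ⬝ᵥ w))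
      + (s * t) ^ 2 * (w ⬝ᵥ M *ᵥ w))) (a * (s * (2 * ((M *ᵥ v) ⬝ᵥ w)))) 0 := by
    have hst : HasDerivAt (fun t : ℝ => s * t) s 0 := by
      simpa using (hasDerivAt_id (0 : ℝ)).const_mul s
    have := (((hst.mul_const (2 * ((M *ᵥ v) ⬝ᵥ w))).const_add (v ⬝ᵥ M *ᵥ v)).fun_add
      ((hst.fun_pow 2).mul_const (w ⬝ᵥ M *ᵥ w))).const_mul a
    simpa using this
  have htotal := hpoly.fun_sub ((hVline.add_const c).const_mul b)
  have heq : (fun t : ℝ => F (q + t • w)) = fun t : ℝ =>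
      a * (v ⬝ᵥ M *ᵥ v + (s * t) * (2 * ((M *ᵥ v) ⬝ᵥ w)) + (s * t) ^ 2 * (w ⬝ᵥ M *ᵥ w))
        - b * (V (q + t • w) + c) := by
    funext t
    rw [hF, add_sub_cancel_left, smul_smul, quadratic_add_smul M hMsymm]
  rw [heq] at hFline
  rw [hFline.unique htotal, sub_dotProduct, smul_dotProduct, smul_dotProduct]
  simp only [smul_eq_mul]
  ring

/-- For the mechanical Lagrangian `L(q,q̇) = (1/2)q̇ᵀMq̇ − V(q)` and
the discrete Lagrangian `L_d(x,y) = (h/2)L(x,(y−x)/h) + (h/2)L(y,(y−x)/h)`, the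
affine GNI equations
`D₁L_d(q_k,q_{k+1}) + D₂L_d(q_{k−1},q_k) = μ(q_k)ᵀλ` and
`μ(q_k) M⁻¹ (D₁L_d(q_k,q_{k+1}) − D₂L_d(q_{k−1},q_k) + 2Π(q_k)) = 0`,
with `Π(q) = M·Y(q)`, hold iff, with `λ̃ = λ/h`, the affine nonholonomic SHAKE
scheme holds: `q_{k+1} − 2q_k + q_{k−1} = −h² M⁻¹(V_q(q_k) + μ(q_k)ᵀλ̃)` and
`μ(q_k)((q_{k+1} − q_{k−1})/(2h) − Y(q_k)) = 0`. -/
theorem gni_affine_shake_scheme {n m : ℕ}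
    (M : Matrix (Fin n) (Fin n) ℝ) (hM : IsUnit M) (hMsymm : Mᵀ = M)
    (V : (Fin n → ℝ) → ℝ) (Vq : (Fin n → ℝ) → Fin n → ℝ)
    (hV : ∀ x, HasFDerivAt V (vecCLM (Vq x)) x)
    (μ : (Fin n → ℝ) → Matrix (Fin m) (Fin n) ℝ)
    (Y : (Fin n → ℝ) → Fin n → ℝ)
    (h : ℝ) (hh : 0 < h)
    (L : (Fin n → ℝ) → (Fin n → ℝ) → ℝ)
    (hL : ∀ x v, L x v = (1 / 2) * (v ⬝ᵥ M *ᵥ v) - V x)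
    (Ld : (Fin n → ℝ) → (Fin n → ℝ) → ℝ)
    (hLd : ∀ x y, Ld x y =
      (h / 2) * L x ((1 / h) • (y - x)) + (h / 2) * L y ((1 / h) • (y - x)))
    (q0 q1 q2 : Fin n → ℝ) (lam : Fin m → ℝ)
    (D1 D2 : Fin n → ℝ)
    (hD1 : HasFDerivAt (fun x => Ld x q2) (vecCLM D1) q1)
    (hD2 : HasFDerivAt (fun y => Ld q0 y) (vecCLM D2) q1) :
    (D1 + D2 = (μ q1)ᵀ *ᵥ lam ∧
        μ q1 *ᵥ (M⁻¹ *ᵥ (D1 - D2 + (2 : ℝ) • (M *ᵥ Y q1))) = 0) ↔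
      (q2 - (2 : ℝ) • q1 + q0 =
          -(h ^ 2) • (M⁻¹ *ᵥ (Vq q1 + (μ q1)ᵀ *ᵥ (h⁻¹ • lam))) ∧
        μ q1 *ᵥ ((1 / (2 * h)) • (q2 - q0) - Y q1) = 0) := by
  have hne : h ≠ 0 := hh.ne'
  have hdet : IsUnit M.det := (Matrix.isUnit_iff_isUnit_det M).mp hM
  have hLd_eq : ∀ x y, Ld x y =
      1 / (2 * h) * ((y - x) ⬝ᵥ M *ᵥ (y - x)) - h / 2 * (V x + V y) := by
    intro x y
    simp only [hLd, hL, mulVec_smul, dotProduct_smul, smul_dotProduct, smul_eq_mul]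
    field_simp
    ring
  have e1 : D1 = (2 * (1 / (2 * h)) * (-1)) • (M *ᵥ (q2 - q1)) - (h / 2) • Vq q1 := by
    refine gradient_of_quadratic_sub_potential M hMsymm V q1 (Vq q1) (q2 - q1) D1 _ _ (V q2) _
      (hV q1) _ (fun x => ?_) hD1
    have hu : q2 - q1 + (-1 : ℝ) • (x - q1) = q2 - x := by module
    rw [hu, hLd_eq]
  have e2 : D2 = (2 * (1 / (2 * h)) * 1) • (M *ᵥ (q1 - q0)) - (h / 2) • Vq q1 := by
    refine gradient_of_quadratic_sub_potential M hMsymm V q1 (Vq q1) (q1 - q0) D2 _ _ (V q0) _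
      (hV q1) _ (fun y => ?_) hD2
    have hu : q1 - q0 + (1 : ℝ) • (y - q1) = y - q0 := by module
    rw [hu, hLd_eq, add_comm (V q0)]
  have hinv : ∀ v, M⁻¹ *ᵥ (M *ᵥ v) = v := fun v => by
    rw [mulVec_mulVec, Matrix.nonsing_inv_mul M hdet, one_mulVec]
  have hinv' : ∀ v, M *ᵥ (M⁻¹ *ᵥ v) = v := fun v => by
    rw [mulVec_mulVec, Matrix.mul_nonsing_inv M hdet, one_mulVec]
  have hsum : D1 + D2 = -(h⁻¹ • (M *ᵥ (q2 - (2 : ℝ) • q1 + q0))) - h • Vq q1 := by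
    rw [e1, e2]
    simp only [mulVec_add, mulVec_sub, mulVec_smul]
    match_scalars <;> field_simp <;> ring
  have hdiff : D1 - D2 + (2 : ℝ) • (M *ᵥ Y q1) =
      M *ᵥ ((-2 : ℝ) • ((1 / (2 * h)) • (q2 - q0) - Y q1)) := by
    rw [e1, e2]
    simp only [mulVec_sub, mulVec_smul]
    match_scalars <;> field_simp <;> ring
  refine and_congr ?_ ?_
  · rw [hsum, mulVec_smul]
    generalize (μ q1)ᵀ *ᵥ lam = c
    constructor
    · intro H
      rw [← H, ← hinv (q2 - (2 : ℝ) • q1 + q0), ← mulVec_smul]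
      congr 1
      rw [hinv]
      match_scalars <;> field_simp <;> ring
    · intro H
      rw [H, mulVec_smul, hinv']
      match_scalars <;> field_simp <;> ring
  · rw [hdiff, hinv, mulVec_smul, smul_eq_zero_iff_right (by norm_num)]
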